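/- Let (M_t)_{t∈[0,T]} be a continuous martingale with M_0 = L J₁ e^{-Tα} and quadratic variation satisfying ⟨M⟩(t) ≥ c ∫_0^t M(s)² ds with c = ζ₀σ²/L², where L,T,α,σ,ζ₀ > 0 and 0 < J₀e^{-Tα} < J₁e^{-Tα} < J₁ < J₂. Let τ be the first hitting time of {L J₀ e^{-Tα}, L J₂}. Then P(M(τ∧T) = L J₂) ≥ (J₁-J₀)/(J₂e^{Tα}-J₀) - ((J₂/J₀)e^{Tα} - J₁/J₀)·(L/(ζ₀^{1/2}σ))·T^{-1/2}. -/

import Mathlib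

open Real MeasureTheory

/-!
Let `A` be the quadratic variation of the martingale `X`. If `A` reaches a level `s` by time `T` on
the paths that stay above `a`, then the probability to hit `b` before `a` and before `T` is bounded
below by `v(X₀, 0)`, where

  `v(X, A) = (X - a) / (b - a) + (1 - (b - X) / (2 √(s - A)))² - 1`.

Indeed `∂v/∂A + ½ ∂²v/∂X² ≥ 0`, so `v(X, A)` is a submartingale up to the exit from the region where
`a < X < b` and the base of the square is positive, and at the exit `v` is at most `1` if `X = b`
and at most `0` otherwise. This replaces the time change to a Brownian motion and the reflection
principle. For lack of a stochastic integral, the submartingale property is used in a discrete form: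
along a fine time grid, a portfolio of the two martingales `X` and `X² - A` rebalanced at the grid
points gains on each step at most the increment of `v`, once the constants in `v` are relaxed by
`η > 0`; its final wealth has mean zero, and one lets first the mesh and then `η` tend to `0`. The
lower bound on the quadratic variation gives `s = c T a²`, and `(1 - u)² - 1 ≥ -2u` linearizes `v`.
-/

open Set Filter Topology

section PathwiseWealth

/-- The compensated square `X² - A` of a state `(X, A)`, where `X` is the value of a martingale and
`A` that of its quadratic variation (its clock). -/
def compensatedSq (z : ℝ × ℝ) : ℝ := z.1 ^ 2 - z.2

/-- The gain between the states `z'` and `z''` of a portfolio bought at the state `z`: `p z` units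
of the martingale and `q z` units of its compensated square. -/
def gain (p q : ℝ × ℝ → ℝ) (z z' z'' : ℝ × ℝ) : ℝ :=
  p z * (z''.1 - z'.1) + q z * (compensatedSq z'' - compensatedSq z')

/-- The first `k` steps of the sequence `z` all belong to the relation `G` of admissible steps. -/
def Survives {E : Type*} (G : Set (E × E)) (z : ℕ → E) (k : ℕ) : Prop :=
  ∀ j < k, (z j, z (j + 1)) ∈ G

open Classical in
/-- The wealth accumulated over the first `n` steps of `z` by the positions `p`, `q`. The portfolio
bought at `z i` is sold at `z (i + 1)` if the step between them is admissible; otherwise it is held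
up to the final state `w` and no portfolio is bought any more. Holding on, rather than selling
after a step that may be arbitrarily large, bounds the wealth in terms of `w` alone. -/
noncomputable def wealth (p q : ℝ × ℝ → ℝ) (G : Set ((ℝ × ℝ) × (ℝ × ℝ))) (z : ℕ → ℝ × ℝ)
    (w : ℝ × ℝ) (n : ℕ) : ℝ :=
  ∑ i ∈ Finset.range n, ((if Survives G z i then gain p q (z i) (z i) w else 0)
    - if Survives G z (i + 1) then gain p q (z i) (z (i + 1)) w else 0)

lemma survives_zero {E : Type*} (G : Set (E × E)) (z : ℕ → E) : Survives G z 0 :=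
  fun _ hj => absurd hj (Nat.not_lt_zero _)

lemma Survives.succ {E : Type*} {G : Set (E × E)} {z : ℕ → E} {k : ℕ} (hk : Survives G z k)
    (hstep : (z k, z (k + 1)) ∈ G) : Survives G z (k + 1) :=
  Nat.forall_lt_succ_right.2 ⟨hk, hstep⟩

variable {p q : ℝ × ℝ → ℝ} {G : Set ((ℝ × ℝ) × (ℝ × ℝ))} {Φ : ℝ × ℝ → ℝ} {z : ℕ → ℝ × ℝ}

lemma gain_sub_gain (p q : ℝ × ℝ → ℝ) (z z' w : ℝ × ℝ) :
    gain p q z z w - gain p q z z' w = gain p q z z z' := by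
  unfold gain
  ring

lemma wealth_le_cases (hΦ : ∀ y y', (y, y') ∈ G → gain p q y y y' ≤ Φ y' - Φ y) (w : ℝ × ℝ)
    (n : ℕ) :
    (Survives G z n ∧ wealth p q G z w n ≤ Φ (z n) - Φ (z 0)) ∨
    ∃ k < n, Survives G z k ∧ (z k, z (k + 1)) ∉ G ∧
      wealth p q G z w n ≤ Φ (z k) - Φ (z 0) + gain p q (z k) (z k) w := by
  induction n with
  | zero => exact .inl ⟨survives_zero G z, by simp [wealth]⟩
  | succ n ih =>
    simp only [wealth, Finset.sum_range_succ] at ih ⊢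
    rcases ih with ⟨hn, hle⟩ | ⟨k, hkn, hk, hbad, hle⟩
    · by_cases hgood : (z n, z (n + 1)) ∈ G
      · refine .inl ⟨hn.succ hgood, ?_⟩
        rw [if_pos hn, if_pos (hn.succ hgood), gain_sub_gain]
        linarith [hΦ _ _ hgood]
      · refine .inr ⟨n, n.lt_succ_self, hn, hgood, ?_⟩
        rw [if_pos hn, if_neg fun h => hgood (h n n.lt_succ_self)]
        linarith
    · refine .inr ⟨k, hkn.trans n.lt_succ_self, hk, hbad, ?_⟩
      rw [if_neg fun h => hbad (h k hkn), if_neg fun h => hbad (h k (hkn.trans n.lt_succ_self))]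
      linarith

lemma Survives.apply_le {B : ℝ} {k : ℕ} (hk : Survives G z k) (h0 : Φ (z 0) ≤ B)
    (hB : ∀ y y', (y, y') ∈ G → Φ y' ≤ B) : Φ (z k) ≤ B := by
  cases k with
  | zero => exact h0
  | succ k => exact hB _ _ (hk k k.lt_succ_self)

lemma wealth_le_of_bounded {B D : ℝ} {w : ℝ × ℝ}
    (hΦ : ∀ y y', (y, y') ∈ G → gain p q y y y' ≤ Φ y' - Φ y)
    (h0 : Φ (z 0) ≤ B) (hB : ∀ y y', (y, y') ∈ G → Φ y' ≤ B)
    (hD : ∀ y, |gain p q y y w| ≤ D) (n : ℕ) :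
    wealth p q G z w n ≤ B - Φ (z 0) + D := by
  rcases wealth_le_cases hΦ w n with ⟨hn, hle⟩ | ⟨k, -, hk, -, hle⟩
  · linarith [hn.apply_le h0 hB, (abs_nonneg _).trans (hD w)]
  · linarith [hk.apply_le h0 hB, (abs_le.1 (hD (z k))).2]

end PathwiseWealth

section MeanZero

variable {Ω : Type*} {m0 : MeasurableSpace Ω} {P : Measure Ω}

lemma integrable_and_integral_mul_martingale_sub [IsFiniteMeasure P] {ι : Type*} [Preorder ι]
    {ℱ : Filtration ι m0} {X : ι → Ω → ℝ} (hX : Martingale X ℱ P) {s t : ι} (hst : s ≤ t)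
    {ξ : Ω → ℝ} (hξ : Measurable[ℱ s] ξ) {C : ℝ} (hC : ∀ ω, |ξ ω| ≤ C) :
    Integrable (fun ω => ξ ω * (X t ω - X s ω)) P ∧ ∫ ω, ξ ω * (X t ω - X s ω) ∂P = 0 := by
  have hint (r : ι) : Integrable (fun ω => ξ ω * X r ω) P :=
    (hX.integrable r).bdd_mul (hξ.mono (ℱ.le s) le_rfl).aestronglyMeasurable (.of_forall hC)
  have heq : ∫ ω, ξ ω * X t ω ∂P = ∫ ω, ξ ω * X s ω ∂P := by
    rw [← integral_condExp (ℱ.le s)]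
    refine integral_congr_ae ?_
    filter_upwards [condExp_mul_of_stronglyMeasurable_left hξ.stronglyMeasurable (hint t)
      (hX.integrable t), hX.condExp_ae_eq hst] with ω hpull hcond
    exact hpull.trans (congrArg (ξ ω * ·) hcond)
  simp only [mul_sub]
  exact ⟨(hint t).sub (hint s), by rw [integral_sub (hint t) (hint s), heq, sub_self]⟩

variable {ℱ : Filtration ℝ m0} {Z : ℝ → Ω → ℝ × ℝ}

lemma measurable_state (hX : Martingale (fun t ω => (Z t ω).1) ℱ P)
    (hN : Martingale (fun t ω => compensatedSq (Z t ω)) ℱ P) (t : ℝ) : Measurable[ℱ t] (Z t) := by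
  have hX_meas : Measurable[ℱ t] fun ω => (Z t ω).1 := (hX.stronglyMeasurable t).measurable
  have hN_meas : Measurable[ℱ t] fun ω => compensatedSq (Z t ω) :=
    (hN.stronglyMeasurable t).measurable
  have hclock : (fun ω => (Z t ω).2) = fun ω => (Z t ω).1 ^ 2 - compensatedSq (Z t ω) := by
    simp only [compensatedSq, sub_sub_cancel]
  refine hX_meas.prodMk ?_
  rw [hclock]
  exact (hX_meas.pow_const 2).sub hN_meas

variable {p q : ℝ × ℝ → ℝ} {G : Set ((ℝ × ℝ) × (ℝ × ℝ))} {C : ℝ}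

open Classical in
lemma integrable_and_integral_ite_gain [IsFiniteMeasure P]
    (hX : Martingale (fun t ω => (Z t ω).1) ℱ P)
    (hN : Martingale (fun t ω => compensatedSq (Z t ω)) ℱ P)
    (hp : Measurable p) (hq : Measurable q) (hpC : ∀ z, |p z| ≤ C) (hqC : ∀ z, |q z| ≤ C)
    {r t T : ℝ} (hrt : r ≤ t) (htT : t ≤ T) {S : Set Ω} (hS : MeasurableSet[ℱ t] S) :
    Integrable (fun ω => if ω ∈ S then gain p q (Z r ω) (Z t ω) (Z T ω) else 0) P ∧
    ∫ ω, (if ω ∈ S then gain p q (Z r ω) (Z t ω) (Z T ω) else 0) ∂P = 0 := by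
  have hZ : Measurable[ℱ t] (Z r) := (measurable_state hX hN r).mono (ℱ.mono hrt) le_rfl
  have hbdd {f : ℝ × ℝ → ℝ} (hf : ∀ z, |f z| ≤ C) (ω : Ω) :
      |S.indicator (f ∘ Z r) ω| ≤ C :=
    (norm_indicator_le_norm_self (f ∘ Z r) ω).trans (hf (Z r ω))
  obtain ⟨hX_int, hX_zero⟩ := integrable_and_integral_mul_martingale_sub hX htT
    ((hp.comp hZ).indicator hS) (hbdd hpC)
  obtain ⟨hN_int, hN_zero⟩ := integrable_and_integral_mul_martingale_sub hN htT
    ((hq.comp hZ).indicator hS) (hbdd hqC)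
  have hsplit : (fun ω => if ω ∈ S then gain p q (Z r ω) (Z t ω) (Z T ω) else 0) =
      fun ω => S.indicator (p ∘ Z r) ω * ((Z T ω).1 - (Z t ω).1) +
        S.indicator (q ∘ Z r) ω * (compensatedSq (Z T ω) - compensatedSq (Z t ω)) := by
    funext ω
    by_cases hω : ω ∈ S <;> simp [hω, gain]
  rw [hsplit]
  exact ⟨hX_int.add hN_int, by rw [integral_add hX_int hN_int, hX_zero, hN_zero, add_zero]⟩

lemma measurableSet_survives {E : Type*} [MeasurableSpace E] {G : Set (E × E)}
    (hG : MeasurableSet G) {Z : ℝ → Ω → E} (hZ : ∀ t, Measurable[ℱ t] (Z t)) {t : ℕ → ℝ}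
    (ht : Monotone t) (k : ℕ) :
    MeasurableSet[ℱ (t k)] {ω | Survives G (fun i => Z (t i) ω) k} := by
  simp only [Survives, ofPred_forall]
  refine MeasurableSet.iInter fun j => MeasurableSet.iInter fun hj => ?_
  have hZ' (i : ℕ) (hi : i ≤ k) : Measurable[ℱ (t k)] (Z (t i)) :=
    (hZ (t i)).mono (ℱ.mono (ht hi)) le_rfl
  exact ((hZ' j hj.le).prodMk (hZ' (j + 1) hj)) hG

lemma integrable_and_integral_wealth [IsFiniteMeasure P]
    (hX : Martingale (fun t ω => (Z t ω).1) ℱ P)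
    (hN : Martingale (fun t ω => compensatedSq (Z t ω)) ℱ P)
    (hp : Measurable p) (hq : Measurable q) (hpC : ∀ z, |p z| ≤ C) (hqC : ∀ z, |q z| ≤ C)
    (hG : MeasurableSet G) {t : ℕ → ℝ} (ht : Monotone t) {T : ℝ} {n : ℕ} (hn : t n ≤ T) :
    Integrable (fun ω => wealth p q G (fun i => Z (t i) ω) (Z T ω) n) P ∧
    ∫ ω, wealth p q G (fun i => Z (t i) ω) (Z T ω) n ∂P = 0 := by
  have hsurv := measurableSet_survives hG (measurable_state hX hN) ht
  have hbuy (i : ℕ) (hi : i < n) := integrable_and_integral_ite_gain hX hN hp hq hpC hqC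
    le_rfl ((ht hi.le).trans hn) (hsurv i)
  have hsell (i : ℕ) (hi : i < n) := integrable_and_integral_ite_gain hX hN hp hq hpC hqC
    (ht i.le_succ) ((ht hi).trans hn) (hsurv (i + 1))
  have hterm (i : ℕ) (hi : i ∈ Finset.range n) :=
    (hbuy i (Finset.mem_range.1 hi)).1.sub (hsell i (Finset.mem_range.1 hi)).1
  refine ⟨integrable_finsetSum _ hterm, ?_⟩
  unfold wealth
  refine (integral_finsetSum _ hterm).trans (Finset.sum_eq_zero fun i hi => ?_)
  have hi' := Finset.mem_range.1 hi
  exact (integral_sub (hbuy i hi').1 (hsell i hi').1).trans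
    ((congrArg₂ (· - ·) (hbuy i hi').2 (hsell i hi').2).trans (sub_self 0))

lemma integral_nonneg_of_eventually_le {F : ℕ → Ω → ℝ} {g D : Ω → ℝ}
    (hF : ∀ n, Integrable (F n) P) (hF0 : ∀ n, 0 ≤ ∫ ω, F n ω ∂P) (hg : Integrable g P)
    (hD : Integrable D P) (hFD : ∀ n ω, F n ω ≤ D ω) (hFg : ∀ ω, ∀ᶠ n in atTop, F n ω ≤ g ω) :
    0 ≤ ∫ ω, g ω ∂P := by
  have hexcess : Tendsto (fun n => ∫ ω, max (F n ω - g ω) 0 ∂P) atTop (𝓝 (∫ _, (0 : ℝ) ∂P)) := by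
    refine tendsto_integral_of_dominated_convergence (fun ω => max (D ω - g ω) 0)
      (fun n => ((hF n).sub hg).pos_part.aestronglyMeasurable) (hD.sub hg).pos_part
      (fun n => .of_forall fun ω => ?_) (.of_forall fun ω => ?_)
    · rw [norm_of_nonneg (le_max_right _ _)]
      exact max_le_max_right 0 (sub_le_sub_right (hFD n ω) _)
    · refine tendsto_const_nhds.congr' ?_
      filter_upwards [hFg ω] with n hn
      exact (max_eq_right (sub_nonpos.2 hn)).symm
  have hlower (n : ℕ) : -∫ ω, g ω ∂P ≤ ∫ ω, max (F n ω - g ω) 0 ∂P :=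
    calc -∫ ω, g ω ∂P ≤ ∫ ω, F n ω ∂P - ∫ ω, g ω ∂P := by linarith [hF0 n]
      _ = ∫ ω, F n ω - g ω ∂P := (integral_sub (hF n) hg).symm
      _ ≤ ∫ ω, max (F n ω - g ω) 0 ∂P :=
        integral_mono ((hF n).sub hg) ((hF n).sub hg).pos_part fun ω => le_max_left _ _
  simpa using ge_of_tendsto' hexcess hlower

end MeanZero

section Subsolution

/-- The distance from the value `z.1` to `b`, measured on the scale `2 √(s - z.2)` of the
fluctuations over the remaining clock `s - z.2` and subtracted from `1`. The positive parameter `η`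
relaxes the constants, which leaves room for discretization errors. -/
noncomputable def margin (b s η : ℝ) (z : ℝ × ℝ) : ℝ :=
  1 - (1 + η) / 2 * (b + η - z.1) / √(s - z.2)

lemma measurable_margin (b s η : ℝ) : Measurable (margin b s η) := by
  unfold margin
  fun_prop

/-- The lower bound `(X - a) / (b - a)` of the probability to hit `b` before `a` without a time
limit, corrected by a quadratic term that accounts for the clock reaching `s`. -/
noncomputable def subsolution (a b s η : ℝ) (z : ℝ × ℝ) : ℝ :=
  (z.1 - a) / (b - a) + margin b s η z ^ 2 - 1

/-- The states at which the portfolio is still rebalanced. The bounds on the clock keep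
`√(s - z.2)` away from its junk value. -/
def continuationRegion (a b s η : ℝ) : Set (ℝ × ℝ) :=
  {z | z.1 ∈ Ioo (a + η) b ∧ z.2 ∈ Ico 0 s ∧ 0 < margin b s η z}

/-- The steps from a state of the continuation region that are small and do not turn back the
clock. -/
def smallSteps (a b s η : ℝ) : Set ((ℝ × ℝ) × (ℝ × ℝ)) :=
  {y | y.1 ∈ continuationRegion a b s η ∧ dist y.2 y.1 ≤ η ^ 3 / 4 ∧ y.1.2 ≤ y.2.2}

/-- The slope of `margin` in the direction of the martingale, cut off outside the continuation
region. -/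
noncomputable def marginSlope (a b s η : ℝ) : ℝ × ℝ → ℝ :=
  (continuationRegion a b s η).indicator fun z => (1 + η) / 2 / √(s - z.2)

/-- The number of units of the martingale in the portfolio that replicates `subsolution`. -/
noncomputable def hedgePosition (a b s η : ℝ) : ℝ × ℝ → ℝ :=
  (continuationRegion a b s η).indicator fun z => (b - a)⁻¹ +
    2 * margin b s η z * marginSlope a b s η z - 2 * marginSlope a b s η z ^ 2 * z.1

variable {a b s η : ℝ} {z z' : ℝ × ℝ}

lemma measurableSet_continuationRegion : MeasurableSet (continuationRegion a b s η) :=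
  (measurable_fst measurableSet_Ioo).inter
    ((measurable_snd measurableSet_Ico).inter (measurable_margin b s η measurableSet_Ioi))

lemma measurableSet_smallSteps : MeasurableSet (smallSteps a b s η) :=
  (measurable_fst measurableSet_continuationRegion).inter
    ((measurableSet_le (measurable_snd.dist measurable_fst) measurable_const).inter
      (measurableSet_le (measurable_snd.comp measurable_fst) (measurable_snd.comp measurable_snd)))

lemma measurable_marginSlope : Measurable (marginSlope a b s η) := by
  refine Measurable.indicator ?_ measurableSet_continuationRegion
  fun_prop

lemma measurable_hedgePosition : Measurable (hedgePosition a b s η) := by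
  have hslope := measurable_marginSlope (a := a) (b := b) (s := s) (η := η)
  have hmargin := measurable_margin b s η
  refine Measurable.indicator ?_ measurableSet_continuationRegion
  fun_prop

lemma margin_le_one (hη : 0 < η) (hz : z.1 ≤ b + η) : margin b s η z ≤ 1 := by
  have h : 0 ≤ (1 + η) / 2 * (b + η - z.1) / √(s - z.2) :=
    div_nonneg (mul_nonneg (by linarith) (sub_nonneg.2 hz)) (sqrt_nonneg _)
  exact sub_le_self 1 h

lemma mul_sub_lt_sqrt_of_mem (hz : z ∈ continuationRegion a b s η) :
    (1 + η) / 2 * (b + η - z.1) < √(s - z.2) :=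
  (div_lt_one (sqrt_pos.2 (sub_pos.2 hz.2.1.2))).1 (sub_pos.1 hz.2.2)

lemma half_lt_sqrt_of_mem (hη : 0 < η) (hz : z ∈ continuationRegion a b s η) :
    η / 2 < √(s - z.2) := by
  nlinarith [mul_sub_lt_sqrt_of_mem hz, hz.1.2, mul_pos hη (sub_pos.2 hz.1.2)]

lemma abs_fst_le_of_mem (hη : 0 < η) (hz : z ∈ continuationRegion a b s η) :
    |z.1| ≤ |a| + |b| := by
  rw [abs_le]
  constructor <;>
    linarith [hz.1.1, hz.1.2, neg_abs_le a, le_abs_self b, abs_nonneg a, abs_nonneg b]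

lemma abs_marginSlope_le (hη : 0 < η) : |marginSlope a b s η z| ≤ 1 / η := by
  by_cases hz : z ∈ continuationRegion a b s η
  · have hsqrt := mul_sub_lt_sqrt_of_mem hz
    have hpos : 0 < √(s - z.2) := sqrt_pos.2 (sub_pos.2 hz.2.1.2)
    rw [marginSlope, indicator_of_mem hz, abs_of_nonneg (by positivity),
      div_le_div_iff₀ hpos hη]
    nlinarith [mul_pos (by linarith : (0 : ℝ) < 1 + η) (sub_pos.2 hz.1.2)]
  · rw [marginSlope, indicator_of_notMem hz, abs_zero]
    positivity

lemma abs_hedgePosition_le (hη : 0 < η) (hab : a < b) : |hedgePosition a b s η z| ≤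
    (b - a)⁻¹ + 2 * (1 / η) + 2 * (1 / η) ^ 2 * (|a| + |b|) := by
  have hba : 0 < (b - a)⁻¹ := inv_pos.2 (sub_pos.2 hab)
  by_cases hz : z ∈ continuationRegion a b s η
  · rw [hedgePosition, indicator_of_mem hz]
    have hmargin : |margin b s η z| ≤ 1 :=
      (abs_of_pos hz.2.2).trans_le (margin_le_one hη (by linarith [hz.1.2]))
    have hslope : |marginSlope a b s η z| ≤ 1 / η := abs_marginSlope_le hη
    have hfst : |z.1| ≤ |a| + |b| := abs_fst_le_of_mem hη hz
    calc |(b - a)⁻¹ + 2 * margin b s η z * marginSlope a b s η z -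
            2 * marginSlope a b s η z ^ 2 * z.1|
        ≤ |(b - a)⁻¹| + |2 * margin b s η z * marginSlope a b s η z| +
            |2 * marginSlope a b s η z ^ 2 * z.1| :=
          (abs_sub _ _).trans (add_le_add_left (abs_add_le _ _) _)
      _ = (b - a)⁻¹ + 2 * |margin b s η z| * |marginSlope a b s η z| +
            2 * |marginSlope a b s η z| ^ 2 * |z.1| := by
          simp only [abs_mul, abs_pow, abs_of_pos hba, Nat.abs_ofNat]
      _ ≤ (b - a)⁻¹ + 2 * 1 * (1 / η) + 2 * (1 / η) ^ 2 * (|a| + |b|) := by gcongr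
      _ = _ := by ring
  · rw [hedgePosition, indicator_of_notMem hz, abs_zero]
    positivity

lemma exists_abs_positions_le (s : ℝ) (hη : 0 < η) (hab : a < b) :
    ∃ C, (∀ z, |hedgePosition a b s η z| ≤ C) ∧ ∀ z, |(marginSlope a b s η ^ 2) z| ≤ C := by
  refine ⟨max _ ((1 / η) ^ 2), fun z => le_max_of_le_left (abs_hedgePosition_le hη hab),
    fun z => le_max_of_le_right ?_⟩
  rw [Pi.pow_apply, abs_pow]
  exact pow_le_pow_left₀ (abs_nonneg _) (abs_marginSlope_le hη) 2

lemma gain_eq_zero_of_notMem (hz : z ∉ continuationRegion a b s η) (w : ℝ × ℝ) :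
    gain (hedgePosition a b s η) (marginSlope a b s η ^ 2) z z w = 0 := by
  simp [gain, hedgePosition, marginSlope, hz]

lemma abs_gain_le_mul {C : ℝ} (hη : 0 < η) (hp : ∀ z, |hedgePosition a b s η z| ≤ C)
    (hq : ∀ z, |(marginSlope a b s η ^ 2) z| ≤ C) (z w : ℝ × ℝ) :
    |gain (hedgePosition a b s η) (marginSlope a b s η ^ 2) z z w| ≤
      C * (|w.1| + |compensatedSq w| + ((|a| + |b|) + ((|a| + |b|) ^ 2 + |s|))) := by
  have hC : 0 ≤ C := (abs_nonneg _).trans (hp z)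
  by_cases hz : z ∈ continuationRegion a b s η
  · have hfst : |z.1| ≤ |a| + |b| := abs_fst_le_of_mem hη hz
    have hsq : |compensatedSq z| ≤ (|a| + |b|) ^ 2 + |s| :=
      calc |compensatedSq z| ≤ |z.1 ^ 2| + |z.2| := abs_sub _ _
        _ = |z.1| ^ 2 + z.2 := by rw [abs_pow, abs_of_nonneg hz.2.1.1]
        _ ≤ (|a| + |b|) ^ 2 + |s| := by
          gcongr
          exact hz.2.1.2.le.trans (le_abs_self s)
    calc |gain (hedgePosition a b s η) (marginSlope a b s η ^ 2) z z w|
        ≤ |hedgePosition a b s η z| * |w.1 - z.1| +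
            |(marginSlope a b s η ^ 2) z| * |compensatedSq w - compensatedSq z| := by
          rw [← abs_mul, ← abs_mul]
          exact abs_add_le _ _
      _ ≤ C * (|w.1| + (|a| + |b|)) + C * (|compensatedSq w| + ((|a| + |b|) ^ 2 + |s|)) := by
          gcongr
          · exact hp z
          · exact (abs_sub _ _).trans (by gcongr)
          · exact hq z
          · exact (abs_sub _ _).trans (by gcongr)
      _ = _ := by ring
  · rw [gain_eq_zero_of_notMem hz, abs_zero]
    positivity

lemma sq_one_sub_div_le {κ m t t' : ℝ} (ht' : 0 < t') (hle : t' ≤ t) (hκ : t ≤ κ * (t + t')) :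
    (1 - m / t) ^ 2 - (κ / t) ^ 2 * (t ^ 2 - t' ^ 2) ≤ (1 - m / t') ^ 2 := by
  have ht : 0 < t := ht'.trans_le hle
  -- The increment is minimal in `m` at `m (1 / t' + 1 / t) = 1`.
  have hsquare : (1 - m / t') ^ 2 - (1 - m / t) ^ 2 =
      (t - t') / (t + t') * ((m * (1 / t' + 1 / t) - 1) ^ 2 - 1) := by
    field_simp
    ring
  have hclock : (t - t') / (t + t') ≤ (κ / t) ^ 2 * (t ^ 2 - t' ^ 2) := by
    rw [div_pow, div_mul_eq_mul_div, div_le_div_iff₀ (by positivity) (by positivity)]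
    have := mul_le_mul_of_nonneg_left (pow_le_pow_left₀ ht.le hκ 2) (sub_nonneg.2 hle)
    linarith
  have hnonneg : 0 ≤ (t - t') / (t + t') * (m * (1 / t' + 1 / t) - 1) ^ 2 :=
    mul_nonneg (div_nonneg (sub_nonneg.2 hle) (by positivity)) (sq_nonneg _)
  linarith

lemma abs_fst_sub_le_of_mem_smallSteps (h : (z, z') ∈ smallSteps a b s η) :
    |z'.1 - z.1| ≤ η ^ 3 / 4 :=
  (le_max_left (dist z'.1 z.1) (dist z'.2 z.2)).trans h.2.1

lemma snd_sub_le_of_mem_smallSteps (h : (z, z') ∈ smallSteps a b s η) : z'.2 - z.2 ≤ η ^ 3 / 4 :=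
  (le_abs_self _).trans ((le_max_right (dist z'.1 z.1) (dist z'.2 z.2)).trans h.2.1)

lemma one_sub_mul_sqrt_le_of_mem_smallSteps (hη : 0 < η) (hη4 : η ≤ 1 / 4)
    (h : (z, z') ∈ smallSteps a b s η) :
    (1 - η) * √(s - z.2) ≤ √(s - z'.2) := by
  have hhalf := half_lt_sqrt_of_mem hη h.1
  have hsq : √(s - z.2) ^ 2 = s - z.2 := sq_sqrt (sub_pos.2 h.1.2.1.2).le
  have hr : η ^ 2 / 4 ≤ √(s - z.2) ^ 2 := by nlinarith
  refine le_sqrt_of_sq_le ?_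
  calc ((1 - η) * √(s - z.2)) ^ 2 ≤ √(s - z.2) ^ 2 - η * √(s - z.2) ^ 2 := by
        nlinarith [mul_nonneg (mul_nonneg hη.le (by linarith : 0 ≤ 1 - η))
          (sq_nonneg √(s - z.2))]
    _ ≤ √(s - z.2) ^ 2 - η * (η ^ 2 / 4) := by gcongr
    _ ≤ s - z'.2 := by linarith [snd_sub_le_of_mem_smallSteps h]

lemma snd_lt_of_mem_smallSteps (hη : 0 < η) (hη4 : η ≤ 1 / 4)
    (h : (z, z') ∈ smallSteps a b s η) : z'.2 < s :=
  sub_pos.1 (sqrt_pos.1 ((mul_pos (by linarith)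
    (sqrt_pos.2 (sub_pos.2 h.1.2.1.2))).trans_le (one_sub_mul_sqrt_le_of_mem_smallSteps hη hη4 h)))

lemma gain_le_subsolution_sub (hη : 0 < η) (hη4 : η ≤ 1 / 4) (h : (z, z') ∈ smallSteps a b s η) :
    gain (hedgePosition a b s η) (marginSlope a b s η ^ 2) z z z' ≤
      subsolution a b s η z' - subsolution a b s η z := by
  have hr : 0 < s - z.2 := sub_pos.2 h.1.2.1.2
  have hr' : 0 < s - z'.2 := sub_pos.2 (snd_lt_of_mem_smallSteps hη hη4 h)
  have ht : 0 < √(s - z.2) := sqrt_pos.2 hr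
  have hκ : √(s - z.2) ≤ (1 + η) / 2 * (√(s - z.2) + √(s - z'.2)) := by
    nlinarith [one_sub_mul_sqrt_le_of_mem_smallSteps hη hη4 h, mul_pos hη ht]
  have hclock := sq_one_sub_div_le (m := (1 + η) / 2 * (b + η - z'.1)) (sqrt_pos.2 hr')
    (sqrt_le_sqrt (sub_le_sub_left h.2.2 s)) hκ
  rw [sq_sqrt hr.le, sq_sqrt hr'.le] at hclock
  simp only [gain, compensatedSq, hedgePosition, marginSlope, subsolution, margin, Pi.pow_apply,
    indicator_of_mem h.1] at hclock ⊢
  refine le_of_eq_of_le ?_ (sub_le_sub_right (sub_le_sub_right (add_le_add_right hclock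
    ((z'.1 - a) / (b - a))) 1) _)
  ring

lemma neg_three_mul_le_margin (hη : 0 < η) (hη4 : η ≤ 1 / 4) (h : (z, z') ∈ smallSteps a b s η) :
    -(3 * η) ≤ margin b s η z' := by
  have hhalf := half_lt_sqrt_of_mem hη h.1
  have hshrink := one_sub_mul_sqrt_le_of_mem_smallSteps hη hη4 h
  have hpos : 0 < √(s - z'.2) := sqrt_pos.2 (sub_pos.2 (snd_lt_of_mem_smallSteps hη hη4 h))
  have hratio : (1 + η) / 2 * (b + η - z'.1) ≤ (1 + 3 * η) * √(s - z'.2) :=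
    calc (1 + η) / 2 * (b + η - z'.1)
        = (1 + η) / 2 * (b + η - z.1) + (1 + η) / 2 * (z.1 - z'.1) := by ring
      _ ≤ √(s - z.2) + η ^ 3 / 4 := by
        refine add_le_add (mul_sub_lt_sqrt_of_mem h.1).le ?_
        nlinarith [(abs_le.1 (abs_fst_sub_le_of_mem_smallSteps h)).1, pow_pos hη 3]
      _ ≤ √(s - z.2) + η ^ 2 / 2 * √(s - z.2) := by nlinarith [mul_pos hη hη]
      _ ≤ (1 + 3 * η) * ((1 - η) * √(s - z.2)) := by
        nlinarith [mul_nonneg (mul_nonneg hη.le (sub_nonneg.2 hη4)) (sqrt_nonneg (s - z.2)),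
          mul_nonneg hη.le (sqrt_nonneg (s - z.2))]
      _ ≤ (1 + 3 * η) * √(s - z'.2) := by gcongr
  have hquot : (1 + η) / 2 * (b + η - z'.1) / √(s - z'.2) ≤ 1 + 3 * η := (div_le_iff₀ hpos).2 hratio
  unfold margin
  linarith

lemma subsolution_le_one_of_mem (hη : 0 < η) (hab : a < b) (hz : z ∈ continuationRegion a b s η) :
    subsolution a b s η z ≤ 1 := by
  have hlin : (z.1 - a) / (b - a) ≤ 1 := (div_le_one (sub_pos.2 hab)).2 (by linarith [hz.1.2])
  have hsq : margin b s η z ^ 2 ≤ 1 :=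
    pow_le_one₀ hz.2.2.le (margin_le_one hη (by linarith [hz.1.2]))
  unfold subsolution
  linarith

lemma subsolution_le_one_add (hη : 0 < η) (hη4 : η ≤ 1 / 4) (hab : a < b)
    (h : (z, z') ∈ smallSteps a b s η) : subsolution a b s η z' ≤ 1 + η / (b - a) := by
  have hfst : z'.1 ≤ b + η := by
    nlinarith [(abs_le.1 (abs_fst_sub_le_of_mem_smallSteps h)).2, h.1.1.2, sq_nonneg η]
  have hlin : (z'.1 - a) / (b - a) ≤ 1 + η / (b - a) := by
    rw [one_add_div (sub_pos.2 hab).ne']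
    exact div_le_div_of_nonneg_right (by linarith) (sub_pos.2 hab).le
  have hsq : margin b s η z' ^ 2 ≤ 1 := by
    nlinarith [neg_three_mul_le_margin hη hη4 h, margin_le_one (s := s) hη hfst]
  unfold subsolution
  linarith

lemma subsolution_le_of_notMem (hη : 0 < η) (hη4 : η ≤ 1 / 4) (hab : a < b)
    (h : (z, z') ∈ smallSteps a b s η) (hz' : z' ∉ continuationRegion a b s η) (hb : z'.1 < b) :
    subsolution a b s η z' ≤ η / (b - a) + 3 * η := by
  have hba : 0 < b - a := sub_pos.2 hab
  have herr : 0 < η / (b - a) := div_pos hη hba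
  have hlower := neg_three_mul_le_margin hη hη4 h
  have hupper : margin b s η z' ≤ 1 := margin_le_one hη (by linarith)
  unfold subsolution
  rcases le_or_gt z'.1 (a + η) with hfst | hfst
  · have hlin : (z'.1 - a) / (b - a) ≤ η / (b - a) := by
      gcongr
      linarith
    nlinarith
  · have hmargin : margin b s η z' ≤ 0 := not_lt.1 fun hpos =>
      hz' ⟨⟨hfst, hb⟩, ⟨h.1.2.1.1.trans h.2.2, snd_lt_of_mem_smallSteps hη hη4 h⟩, hpos⟩
    have hlin : (z'.1 - a) / (b - a) ≤ 1 := (div_le_one hba).2 (by linarith)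
    nlinarith

end Subsolution

section Paths

/-- The grid of step `T / (n + 1)`, whose point of index `n + 1` is `T`. -/
noncomputable def gridTime (T : ℝ) (n i : ℕ) : ℝ := i * (T / (n + 1))

/-- The first nonnegative time at which `m` takes the value `a` or `b`, and `0` if there is none. -/
noncomputable def firstHit (m : ℝ → ℝ) (a b : ℝ) : ℝ := sInf {t | 0 ≤ t ∧ (m t = a ∨ m t = b)}

variable {a b s η T : ℝ}

lemma gridTime_zero (T : ℝ) (n : ℕ) : gridTime T n 0 = 0 := by
  simp [gridTime]

lemma gridTime_last (T : ℝ) (n : ℕ) : gridTime T n (n + 1) = T := by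
  simp only [gridTime, Nat.cast_add_one]
  exact mul_div_cancel₀ T n.cast_add_one_ne_zero

lemma monotone_gridTime (hT : 0 ≤ T) (n : ℕ) : Monotone (gridTime T n) := fun _ _ hij =>
  mul_le_mul_of_nonneg_right (Nat.cast_le.2 hij) (div_nonneg hT n.cast_add_one_pos.le)

lemma gridTime_mem_Icc (hT : 0 ≤ T) {n i : ℕ} (hi : i ≤ n + 1) : gridTime T n i ∈ Icc 0 T := by
  constructor
  · simpa only [gridTime_zero] using monotone_gridTime hT n i.zero_le
  · simpa only [gridTime_last] using monotone_gridTime hT n hi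

lemma exists_mem_Icc_gridTime {n k : ℕ} {t : ℝ} (ht0 : 0 < t) (htk : t ≤ gridTime T n k) :
    ∃ i < k, t ∈ Icc (gridTime T n i) (gridTime T n (i + 1)) := by
  induction k with
  | zero => exact absurd htk (by simpa [gridTime] using ht0)
  | succ k ih =>
    rcases le_total t (gridTime T n k) with hle | hle
    · obtain ⟨i, hik, hi⟩ := ih hle
      exact ⟨i, hik.trans k.lt_succ_self, hi⟩
    · exact ⟨k, k.lt_succ_self, hle, htk⟩

lemma eventually_dist_gridTime_le {E : Type*} [PseudoMetricSpace E] {f : ℝ → E}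
    (hf : Continuous f) (hT : 0 ≤ T) {ρ : ℝ} (hρ : 0 < ρ) :
    ∀ᶠ n in atTop, ∀ i ≤ n, ∀ t ∈ Icc (gridTime T n i) (gridTime T n (i + 1)),
      dist (f t) (f (gridTime T n i)) ≤ ρ := by
  obtain ⟨δ, hδ, hunif⟩ := Metric.uniformContinuousOn_iff.1
    (isCompact_Icc.uniformContinuousOn_of_continuous hf.continuousOn) ρ hρ
  have hmesh : Tendsto (fun n : ℕ => T / (n + 1)) atTop (𝓝 0) :=
    tendsto_const_div_atTop_nhds_zero_nat T |>.comp (tendsto_add_atTop_nat 1) |>.congr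
      fun n => by simp
  filter_upwards [hmesh.eventually_lt_const hδ] with n hn i hi t ht
  have hi_mem : gridTime T n i ∈ Icc 0 T := gridTime_mem_Icc hT (hi.trans n.le_succ)
  have hsucc_mem : gridTime T n (i + 1) ∈ Icc 0 T := gridTime_mem_Icc hT (Nat.succ_le_succ hi)
  refine (hunif t ⟨hi_mem.1.trans ht.1, ht.2.trans hsucc_mem.2⟩ _ hi_mem ?_).le
  have hstep : gridTime T n (i + 1) = gridTime T n i + T / (n + 1) := by
    simp only [gridTime, Nat.cast_add_one, add_one_mul]
  rw [Real.dist_eq, abs_of_nonneg (sub_nonneg.2 ht.1)]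
  linarith [ht.2]

lemma apply_min_firstHit {m : ℝ → ℝ} (hm : Continuous m) {t : ℝ} (ht0 : 0 ≤ t) (htT : t ≤ T)
    (h0 : m 0 ≤ b) (ha : ∀ u ∈ Icc 0 t, a < m u) (hb : b ≤ m t) :
    m (min (firstHit m a b) T) = b := by
  obtain ⟨u, hu, hub⟩ := intermediate_value_Icc ht0 hm.continuousOn ⟨h0, hb⟩
  have hbdd : BddBelow {t | 0 ≤ t ∧ (m t = a ∨ m t = b)} := ⟨0, fun _ h => h.1⟩
  have hclosed : IsClosed {t | 0 ≤ t ∧ (m t = a ∨ m t = b)} := isClosed_Ici.inter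
    ((isClosed_eq hm continuous_const).union (isClosed_eq hm continuous_const))
  have hu_hit : u ∈ {t | 0 ≤ t ∧ (m t = a ∨ m t = b)} := ⟨hu.1, .inr hub⟩
  obtain ⟨hτ0, hτ⟩ := hclosed.csInf_mem ⟨u, hu_hit⟩ hbdd
  have hτt : firstHit m a b ≤ t := (csInf_le hbdd hu_hit).trans hu.2
  rw [min_eq_left (hτt.trans htT)]
  exact hτ.resolve_left (ha _ ⟨hτ0, hτt⟩).ne'

variable {f : ℝ → ℝ × ℝ} {n k : ℕ}

lemma lt_fst_of_survives (hη : 0 < η) (hη4 : η ≤ 1 / 4) (h0 : a < (f 0).1)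
    (hclose : ∀ i ≤ n, ∀ t ∈ Icc (gridTime T n i) (gridTime T n (i + 1)),
      dist (f t) (f (gridTime T n i)) ≤ η ^ 3 / 4)
    (hk : Survives (smallSteps a b s η) (fun i => f (gridTime T n i)) k) (hkn : k ≤ n + 1)
    {t : ℝ} (ht : t ∈ Icc 0 (gridTime T n k)) : a < (f t).1 := by
  rcases ht.1.eq_or_lt with rfl | ht0
  · exact h0
  obtain ⟨i, hik, hi⟩ := exists_mem_Icc_gridTime ht0 ht.2
  have hdist : |(f t).1 - (f (gridTime T n i)).1| ≤ η ^ 3 / 4 :=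
    (le_max_left _ _).trans (hclose i (Nat.lt_succ_iff.1 (hik.trans_le hkn)) t hi)
  nlinarith [(abs_le.1 hdist).1, (hk i hik).1.1.1, sq_nonneg η]

lemma wealth_gridTime_le (hη : 0 < η) (hη4 : η ≤ 1 / 4) (hab : a < b) (hT : 0 ≤ T)
    (hf : Continuous f) (hclock : Monotone fun t => (f t).2)
    (h0 : f 0 ∈ continuationRegion a b s η)
    (hreach : (∀ t ∈ Icc 0 T, a ≤ (f t).1) → s ≤ (f T).2)
    (hclose : ∀ i ≤ n, ∀ t ∈ Icc (gridTime T n i) (gridTime T n (i + 1)),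
      dist (f t) (f (gridTime T n i)) ≤ η ^ 3 / 4) (w : ℝ × ℝ) :
    wealth (hedgePosition a b s η) (marginSlope a b s η ^ 2) (smallSteps a b s η)
        (fun i => f (gridTime T n i)) w (n + 1) ≤
      η / (b - a) + 3 * η - subsolution a b s η (f 0) +
        if (f (min (firstHit (fun t => (f t).1) a b) T)).1 = b then 1 else 0 := by
  have ha0 : a < (f 0).1 := by linarith [h0.1.1]
  rcases wealth_le_cases (G := smallSteps a b s η) (z := fun i => f (gridTime T n i))
    (fun _ _ => gain_le_subsolution_sub hη hη4) w (n + 1)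
    with ⟨hall, -⟩ | ⟨k, hkn, hk, hbad, hle⟩
  · have habove : ∀ t ∈ Icc 0 T, a < (f t).1 := fun t ht =>
      lt_fst_of_survives hη hη4 ha0 hclose hall le_rfl (by rwa [gridTime_last])
    have hlt : (f T).2 < s := by
      simpa only [gridTime_last] using snd_lt_of_mem_smallSteps hη hη4 (hall n n.lt_succ_self)
    exact absurd (hreach fun t ht => (habove t ht).le) hlt.not_ge
  have hgrid : gridTime T n k ≤ gridTime T n (k + 1) := monotone_gridTime hT n k.le_succ
  have hexit : f (gridTime T n k) ∉ continuationRegion a b s η := fun hmem =>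
    hbad ⟨hmem, hclose k (Nat.lt_succ_iff.1 hkn) _ (right_mem_Icc.2 hgrid), hclock hgrid⟩
  rw [gain_eq_zero_of_notMem hexit, add_zero, gridTime_zero] at hle
  obtain _ | j := k
  · exact absurd (by rwa [gridTime_zero]) hexit
  have hlast := hk j j.lt_succ_self
  rcases lt_or_ge (f (gridTime T n (j + 1))).1 b with hlt | hge
  · have hvalue := subsolution_le_of_notMem hη hη4 hab hlast hexit hlt
    have hite : (0 : ℝ) ≤ if (f (min (firstHit (fun t => (f t).1) a b) T)).1 = b then 1 else 0 := by
      split_ifs <;> norm_num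
    linarith
  · have hmem : gridTime T n (j + 1) ∈ Icc 0 T := gridTime_mem_Icc hT hkn.le
    rw [if_pos (apply_min_firstHit hf.fst hmem.1 hmem.2 h0.1.2.le
      (fun u hu => lt_fst_of_survives hη hη4 ha0 hclose hk hkn.le hu) hge)]
    linarith [subsolution_le_one_add hη hη4 hab hlast]

end Paths

section HittingProbability

variable {Ω : Type*} {m0 : MeasurableSpace Ω} {P : Measure Ω} {ℱ : Filtration ℝ m0}

section State

variable {Z : ℝ → Ω → ℝ × ℝ} {a b s T : ℝ}

lemma exists_integrable_wealth_le [IsFiniteMeasure P] {η : ℝ} {z₀ : ℝ × ℝ}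
    (hX : Martingale (fun t ω => (Z t ω).1) ℱ P)
    (hN : Martingale (fun t ω => compensatedSq (Z t ω)) ℱ P)
    (hZ0 : ∀ ω, Z 0 ω = z₀) (hab : a < b) (hη : 0 < η) (hη4 : η ≤ 1 / 4)
    (hz₀ : z₀ ∈ continuationRegion a b s η) :
    ∃ D, Integrable D P ∧ ∀ n ω, wealth (hedgePosition a b s η) (marginSlope a b s η ^ 2)
      (smallSteps a b s η) (fun i => Z (gridTime T n i) ω) (Z T ω) (n + 1) ≤ D ω := by
  obtain ⟨C, hpC, hqC⟩ := exists_abs_positions_le s hη hab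
  have hstart : subsolution a b s η z₀ ≤ 1 + η / (b - a) :=
    (subsolution_le_one_of_mem hη hab hz₀).trans
      (le_add_of_nonneg_right (div_nonneg hη.le (sub_pos.2 hab).le))
  refine ⟨fun ω => 1 + η / (b - a) - subsolution a b s η z₀ + C * (|(Z T ω).1| +
    |compensatedSq (Z T ω)| + ((|a| + |b|) + ((|a| + |b|) ^ 2 + |s|))), ?_, fun n ω => ?_⟩
  · exact (integrable_const _).add ((((hX.integrable T).abs.add (hN.integrable T).abs).add
      (integrable_const _)).const_mul C)
  · have hbound := wealth_le_of_bounded (z := fun i => Z (gridTime T n i) ω)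
      (Φ := subsolution a b s η) (w := Z T ω) (fun _ _ => gain_le_subsolution_sub hη hη4)
      (by simpa only [gridTime_zero, hZ0] using hstart)
      (fun _ _ => subsolution_le_one_add hη hη4 hab)
      (fun y => abs_gain_le_mul hη hpC hqC y (Z T ω)) (n + 1)
    simpa only [gridTime_zero, hZ0] using hbound

lemma integrable_and_integral_wealth_gridTime [IsFiniteMeasure P] {η : ℝ}
    (hX : Martingale (fun t ω => (Z t ω).1) ℱ P)
    (hN : Martingale (fun t ω => compensatedSq (Z t ω)) ℱ P)
    (hab : a < b) (hη : 0 < η) (hT : 0 ≤ T) (n : ℕ) :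
    Integrable (fun ω => wealth (hedgePosition a b s η) (marginSlope a b s η ^ 2)
      (smallSteps a b s η) (fun i => Z (gridTime T n i) ω) (Z T ω) (n + 1)) P ∧
    ∫ ω, wealth (hedgePosition a b s η) (marginSlope a b s η ^ 2)
      (smallSteps a b s η) (fun i => Z (gridTime T n i) ω) (Z T ω) (n + 1) ∂P = 0 := by
  obtain ⟨C, hpC, hqC⟩ := exists_abs_positions_le s hη hab
  have hq : Measurable (marginSlope a b s η ^ 2) := measurable_marginSlope.pow_const 2
  exact integrable_and_integral_wealth hX hN measurable_hedgePosition hq hpC hqC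
    measurableSet_smallSteps (monotone_gridTime hT n) (gridTime_last T n).le

lemma subsolution_sub_le_measureReal [IsProbabilityMeasure P] {η : ℝ} {z₀ : ℝ × ℝ}
    (hX : Martingale (fun t ω => (Z t ω).1) ℱ P)
    (hN : Martingale (fun t ω => compensatedSq (Z t ω)) ℱ P)
    (hcont : ∀ ω, Continuous fun t => Z t ω) (hclock : ∀ ω, Monotone fun t => (Z t ω).2)
    (hZ0 : ∀ ω, Z 0 ω = z₀) (hab : a < b) (hT : 0 ≤ T)
    (hreach : ∀ ω, (∀ t ∈ Icc 0 T, a ≤ (Z t ω).1) → s ≤ (Z T ω).2)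
    (hη : 0 < η) (hη4 : η ≤ 1 / 4) (hz₀ : z₀ ∈ continuationRegion a b s η) :
    subsolution a b s η z₀ - (η / (b - a) + 3 * η) ≤
      P.real {ω | (Z (min (firstHit (fun t => (Z t ω).1) a b) T) ω).1 = b} := by
  set E : Set Ω := {ω | (Z (min (firstHit (fun t => (Z t ω).1) a b) T) ω).1 = b}
  obtain ⟨D, hD, hwealth_le⟩ := exists_integrable_wealth_le (T := T) hX hN hZ0 hab hη hη4 hz₀
  have hwealth := integrable_and_integral_wealth_gridTime (s := s) hX hN hab hη hT
  have hmeas : MeasurableSet (toMeasurable P E) := measurableSet_toMeasurable P E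
  have hindicator : Integrable ((toMeasurable P E).indicator (1 : Ω → ℝ)) P :=
    (integrable_const 1).indicator hmeas
  have hnonneg := integral_nonneg_of_eventually_le (fun n => (hwealth n).1)
    (fun n => (hwealth n).2.ge)
    ((integrable_const (η / (b - a) + 3 * η - subsolution a b s η z₀)).add hindicator)
    hD hwealth_le fun ω => ?_
  · have hmean : ∫ ω, (η / (b - a) + 3 * η - subsolution a b s η z₀ +
        (toMeasurable P E).indicator 1 ω) ∂P =
        η / (b - a) + 3 * η - subsolution a b s η z₀ + P.real E := by
      rw [integral_add (integrable_const _) hindicator, integral_const, probReal_univ, one_smul,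
        integral_indicator_one hmeas, measureReal_def, measure_toMeasurable, measureReal_def]
    linarith [hnonneg.trans_eq hmean]
  · filter_upwards [eventually_dist_gridTime_le (hcont ω) hT (by positivity : 0 < η ^ 3 / 4)]
      with n hclose
    refine (wealth_gridTime_le hη hη4 hab hT (hcont ω) (hclock ω) (by rwa [hZ0]) (hreach ω) hclose
      (Z T ω)).trans ?_
    rw [hZ0]
    refine add_le_add_right ?_ _
    split_ifs with h
    · rw [indicator_of_mem (subset_toMeasurable P E h), Pi.one_apply]
    · exact indicator_nonneg (fun _ _ => zero_le_one) ω

lemma sub_div_sqrt_le_measureReal [IsProbabilityMeasure P] {x : ℝ}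
    (hX : Martingale (fun t ω => (Z t ω).1) ℱ P)
    (hN : Martingale (fun t ω => compensatedSq (Z t ω)) ℱ P)
    (hcont : ∀ ω, Continuous fun t => Z t ω) (hclock : ∀ ω, Monotone fun t => (Z t ω).2)
    (hZ0 : ∀ ω, Z 0 ω = (x, 0)) (hax : a < x) (hxb : x < b) (hs : 0 < s) (hT : 0 ≤ T)
    (hreach : ∀ ω, (∀ t ∈ Icc 0 T, a ≤ (Z t ω).1) → s ≤ (Z T ω).2) :
    (x - a) / (b - a) - (b - x) / √s ≤
      P.real {ω | (Z (min (firstHit (fun t => (Z t ω).1) a b) T) ω).1 = b} := by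
  have hab : a < b := hax.trans hxb
  rcases le_or_gt 1 ((b - x) / √s) with hlarge | hsmall
  · have hlin : (x - a) / (b - a) ≤ 1 := (div_le_one (sub_pos.2 hab)).2 (by linarith)
    exact (sub_nonpos.2 (hlin.trans hlarge)).trans measureReal_nonneg
  have hmargin : Tendsto (fun η => margin b s η (x, 0)) (𝓝[>] 0)
      (𝓝 (1 - (b - x) / √s / 2)) := by
    refine (Continuous.tendsto' ?_ 0 _ ?_).mono_left nhdsWithin_le_nhds
    · unfold margin
      fun_prop
    · simp only [margin, add_zero, sub_zero]
      ring
  have hlower : Tendsto (fun η => subsolution a b s η (x, 0) - (η / (b - a) + 3 * η)) (𝓝[>] 0)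
      (𝓝 ((x - a) / (b - a) + (1 - (b - x) / √s / 2) ^ 2 - 1 - 0)) :=
    ((hmargin.pow 2).const_add _ |>.sub_const 1).sub
      ((Continuous.tendsto' (by fun_prop) 0 0 (by simp)).mono_left nhdsWithin_le_nhds)
  have hregion : ∀ᶠ η in 𝓝[>] 0, (x, 0) ∈ continuationRegion a b s η := by
    filter_upwards [hmargin.eventually_const_lt (by linarith : 0 < 1 - (b - x) / √s / 2),
      Ioo_mem_nhdsGT (sub_pos.2 hax)] with η hpos hη
    exact ⟨⟨by linarith [hη.2], hxb⟩, ⟨le_rfl, hs⟩, hpos⟩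
  have hlimit := le_of_tendsto hlower (by
    filter_upwards [hregion, Ioc_mem_nhdsGT (by norm_num : (0 : ℝ) < 1 / 4)] with η hz hη
    exact subsolution_sub_le_measureReal hX hN hcont hclock hZ0 hab hT hreach hη.1 hη.2 hz)
  nlinarith [sq_nonneg ((b - x) / √s)]

end State

lemma mul_sq_le_integral_sq {f : ℝ → ℝ} {a T : ℝ} (hf : Continuous f) (hT : 0 ≤ T) (ha : 0 ≤ a)
    (hle : ∀ t ∈ Icc 0 T, a ≤ f t) : T * a ^ 2 ≤ ∫ t in (0 : ℝ)..T, f t ^ 2 :=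
  calc T * a ^ 2 = ∫ _ in (0 : ℝ)..T, a ^ 2 := by
        rw [intervalIntegral.integral_const, sub_zero, smul_eq_mul]
    _ ≤ ∫ t in (0 : ℝ)..T, f t ^ 2 :=
        intervalIntegral.integral_mono_on hT intervalIntegrable_const
          ((hf.pow 2).intervalIntegrable 0 T) fun t ht => pow_le_pow_left₀ ha (hle t ht) 2

theorem hitting_probability_lower_bound_before_T_general [IsProbabilityMeasure P]
    {M QV : ℝ → Ω → ℝ} {a x b c T : ℝ}
    (ha : 0 < a) (hax : a < x) (hxb : x < b) (hc : 0 < c) (hT : 0 < T)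
    (hM : Martingale M ℱ P) (hcont : ∀ ω, Continuous fun t => M t ω) (hM0 : ∀ ω, M 0 ω = x)
    (hQVmart : Martingale (fun t ω => M t ω ^ 2 - QV t ω) ℱ P) (hQV0 : ∀ ω, QV 0 ω = 0)
    (hQVmono : ∀ ω, Monotone fun t => QV t ω) (hQVcont : ∀ ω, Continuous fun t => QV t ω)
    (hQVlb : ∀ ω, c * ∫ t in (0 : ℝ)..T, M t ω ^ 2 ≤ QV T ω) :
    (x - a) / (b - a) - (b - x) / (a * √(c * T)) ≤
      P.real {ω | M (min (firstHit (fun t => M t ω) a b) T) ω = b} := by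
  have hreach (ω : Ω) (hω : ∀ t ∈ Icc 0 T, a ≤ M t ω) : c * T * a ^ 2 ≤ QV T ω :=
    calc c * T * a ^ 2 = c * (T * a ^ 2) := mul_assoc c T (a ^ 2)
      _ ≤ c * ∫ t in (0 : ℝ)..T, M t ω ^ 2 :=
        mul_le_mul_of_nonneg_left (mul_sq_le_integral_sq (hcont ω) hT.le ha.le hω) hc.le
      _ ≤ QV T ω := hQVlb ω
  have hsqrt : √(c * T * a ^ 2) = a * √(c * T) := by
    rw [sqrt_mul (by positivity), sqrt_sq ha.le, mul_comm]
  rw [← hsqrt]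
  exact sub_div_sqrt_le_measureReal (Z := fun t ω => (M t ω, QV t ω)) hM hQVmart
    (fun ω => (hcont ω).prodMk (hQVcont ω)) hQVmono (fun ω => Prod.ext (hM0 ω) (hQV0 ω))
    hax hxb (by positivity) hT.le hreach

end HittingProbability

lemma barrier_bound_eq {L T α σ ζ₀ J₀ J₁ J₂ : ℝ} (hL : 0 < L) (hT : 0 < T) (hσ : 0 < σ)
    (hζ₀ : 0 < ζ₀) (hJ₀ : 0 < J₀) :
    (J₁ - J₀) / (J₂ * exp (T * α) - J₀) -
        (J₂ / J₀ * exp (T * α) - J₁ / J₀) * (L / (√ζ₀ * σ)) / √T =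
      (L * J₁ * exp (-T * α) - L * J₀ * exp (-T * α)) / (L * J₂ - L * J₀ * exp (-T * α)) -
        (L * J₂ - L * J₁ * exp (-T * α)) /
          (L * J₀ * exp (-T * α) * √(ζ₀ * σ ^ 2 / L ^ 2 * T)) := by
  have hsqrt : √(ζ₀ * σ ^ 2 / L ^ 2 * T) = √ζ₀ * σ / L * √T := by
    rw [sqrt_mul (by positivity), sqrt_div (by positivity), sqrt_mul hζ₀.le, sqrt_sq hσ.le,
      sqrt_sq hL.le]
  have hexp : exp (T * α) = (exp (-T * α))⁻¹ := by rw [← exp_neg, neg_mul, neg_neg]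
  have he : 0 < exp (-T * α) := exp_pos _
  rw [hsqrt, hexp]
  congr 1
  · rw [← mul_div_mul_left _ _ (mul_pos hL he).ne']
    congr 1 <;> field_simp
  · field_simp

/-- Lower bound on the probability that a continuous martingale with quadratic variation
bounded below by `c ∫₀ᵗ M(s)² ds`, `c = ζ₀σ²/L²`, hits the upper barrier `L·J₂` before
time `T` and before the lower barrier `L·J₀·e^{-Tα}`. -/
theorem hitting_probability_lower_bound_before_T
    {Ω : Type*} {m0 : MeasurableSpace Ω} {P : Measure Ω} [IsProbabilityMeasure P]
    (ℱ : Filtration ℝ m0) (M QV : ℝ → Ω → ℝ)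
    (L T α σ ζ₀ J₀ J₁ J₂ : ℝ)
    (hL : 0 < L) (hT : 0 < T) (hα : 0 < α) (hσ : 0 < σ) (hζ₀ : 0 < ζ₀)
    (h0 : 0 < J₀ * Real.exp (-T * α))
    (h01 : J₀ * Real.exp (-T * α) < J₁ * Real.exp (-T * α))
    (h1 : J₁ * Real.exp (-T * α) < J₁) (h12 : J₁ < J₂)
    (hM : Martingale M ℱ P)
    (hcont : ∀ ω : Ω, Continuous fun t : ℝ => M t ω)
    (hM0 : ∀ ω : Ω, M 0 ω = L * J₁ * Real.exp (-T * α))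
    -- `QV` is the quadratic variation of `M`:
    (hQVmart : Martingale (fun t ω => (M t ω) ^ 2 - QV t ω) ℱ P)
    (hQV0 : ∀ ω : Ω, QV 0 ω = 0)
    (hQVmono : ∀ ω : Ω, Monotone fun t : ℝ => QV t ω)
    (hQVcont : ∀ ω : Ω, Continuous fun t : ℝ => QV t ω)
    -- lower bound `⟨M⟩(t) ≥ (ζ₀σ²/L²) ∫₀ᵗ M(s)² ds`:
    (hQVlb : ∀ (t : ℝ) (ω : Ω), 0 ≤ t →
      (ζ₀ * σ ^ 2 / L ^ 2) * ∫ s in (0:ℝ)..t, (M s ω) ^ 2 ≤ QV t ω)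
    (τ : Ω → ℝ)
    (hτ : ∀ ω : Ω, τ ω = sInf {t : ℝ | 0 ≤ t ∧
      (M t ω = L * J₀ * Real.exp (-T * α) ∨ M t ω = L * J₂)}) :
    (J₁ - J₀) / (J₂ * Real.exp (T * α) - J₀)
      - ((J₂ / J₀) * Real.exp (T * α) - J₁ / J₀) * (L / (Real.sqrt ζ₀ * σ)) / Real.sqrt T
    ≤ (P {ω : Ω | M (min (τ ω) T) ω = L * J₂}).toReal := by
  have hJ₀ : 0 < J₀ := pos_of_mul_pos_left h0 (exp_pos _).le
  rw [barrier_bound_eq hL hT hσ hζ₀ hJ₀]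
  simp only [hτ]
  refine hitting_probability_lower_bound_before_T_general (by positivity) ?_ ?_ (by positivity) hT
    hM hcont hM0 hQVmart hQV0 hQVmono hQVcont fun ω => hQVlb T ω hT.le
  · simpa only [mul_assoc] using mul_lt_mul_of_pos_left h01 hL
  · simpa only [mul_assoc] using mul_lt_mul_of_pos_left (h1.trans h12) hL
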